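/- Let α_1,…,α_5 be roots of unity (each ≠ 1) with α_1α_2 = 1 and α_3α_4α_5 = 1, and let ω_1,…,ω_4 be a spanning set of a 3-dimensional space subject to the single relation (1-α_1^{-1})ω_1 + (1-α_3^{-1})ω_3 + (1-α_3^{-1}α_4^{-1})ω_4 = 0, so that ω_3 = -((1-α_1^{-1})/(1-α_3^{-1}))ω_1 - ((1-α_5)/(1-α_3^{-1}))ω_4. Define T_{45} by T_{45}(ω_1)=ω_1, T_{45}(ω_2)=ω_2, T_{45}(ω_4)=α_4α_5ω_4, and T_{34} by T_{34}(ω_1)=ω_1, T_{34}(ω_2)=ω_2+(1-α_4)ω_3, T_{34}(ω_4)=ω_4+(α_4-α_3α_4)ω_3. Then, modulo ω_1, T_{45}(ω_2+λω_4) ≡ ω_2 + α_3^{-1}λ ω_4 and T_{34}(ω_2+λω_4) ≡ ω_2 + (-(1-α_4)(1-α_5)/(1-α_3^{-1}) + α_5^{-1}λ)ω_4. -/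

import Mathlib

/-!
Modulo `ω₁` the relation makes `ω₃` a multiple `r ω₄`, so a map that moves `ω₂` and `ω₄` along
`ω₃` preserves the affine line `ω₂ + ⟨ω₄⟩` modulo `ω₁`. For `T₃₄` the linear part of this action
is `1 + (α₄ - α₃ α₄) r`; since `α₄ - α₃ α₄ = -α₃ α₄ (1 - α₃⁻¹)`, the denominator of `r` cancels,
leaving `1 + α₃ α₄ (1 - α₅) = α₃ α₄ = α₅⁻¹`.
-/

theorem map_add_smul_smodEq {R M : Type*} [Ring R] [AddCommGroup M] [Module R M]
    {N : Submodule R M} {T : M →ₗ[R] M} {u e w : M} {r s t : R}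
    (hw : w ≡ r • e [SMOD N]) (hu : T u = u + s • w) (he : T e = e + t • w) (l : R) :
    T (u + l • e) ≡ u + (l + (s + l * t) * r) • e [SMOD N] :=
  calc
    T (u + l • e) = (u + l • e) + (s + l * t) • w := by
      rw [map_add, map_smul, hu, he, smul_add, smul_smul, add_smul]
      abel
    _ ≡ (u + l • e) + (s + l * t) • r • e [SMOD N] := SModEq.rfl.add (hw.smul _)
    _ = u + (l + (s + l * t) * r) • e := by
      rw [smul_smul, add_assoc, ← add_smul]

section Field

variable {K V : Type*} [Field K] [AddCommGroup V] [Module K V]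

theorem eq_neg_div_smul_add_neg_div_smul {a b c : K} {x y z : V} (hb : b ≠ 0)
    (h : a • x + b • y + c • z = 0) : y = (-(a / b)) • x + (-(c / b)) • z := by
  have hy : b • y = -(a • x) - c • z := by linear_combination (norm := module) h
  calc
    y = b⁻¹ • b • y := (inv_smul_smul₀ hb y).symm
    _ = b⁻¹ • (-(a • x) - c • z) := by rw [hy]
    _ = (-(a / b)) • x + (-(c / b)) • z := by module

theorem one_add_sub_mul_mul_neg_div_eq_inv {a b c : K} (ha : a ≠ 1) (habc : a * b * c = 1) :
    1 + (b - a * b) * -((1 - c) / (1 - a⁻¹)) = c⁻¹ := by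
  have ha₀ : a ≠ 0 := left_ne_zero_of_mul (left_ne_zero_of_mul_eq_one habc)
  have hden : 1 - a⁻¹ ≠ 0 := sub_ne_zero.mpr (inv_ne_one.mpr ha).symm
  have hfactor : b - a * b = -(a * b) * (1 - a⁻¹) := by
    field_simp
    ring
  calc
    1 + (b - a * b) * -((1 - c) / (1 - a⁻¹)) = 1 + a * b * (1 - c) := by
      rw [hfactor, neg_mul, neg_mul_neg, mul_assoc, mul_div_cancel₀ _ hden]
    _ = a * b := by linear_combination -habc
    _ = c⁻¹ := eq_inv_of_mul_eq_one_left habc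

theorem stmt19_general {α₃ α₄ α₅ κ : K} {ω₁ ω₂ ω₃ ω₄ : V} {T₄₅ T₃₄ : V →ₗ[K] V}
    (hα₃ : α₃ ≠ 1) (h345 : α₃ * α₄ * α₅ = 1)
    (hrel : κ • ω₁ + (1 - α₃⁻¹) • ω₃ + (1 - α₃⁻¹ * α₄⁻¹) • ω₄ = 0)
    (h45₂ : T₄₅ ω₂ = ω₂) (h45₄ : T₄₅ ω₄ = (α₄ * α₅) • ω₄)
    (h34₂ : T₃₄ ω₂ = ω₂ + (1 - α₄) • ω₃)
    (h34₄ : T₃₄ ω₄ = ω₄ + (α₄ - α₃ * α₄) • ω₃) :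
    ω₃ = (-(κ / (1 - α₃⁻¹))) • ω₁ + (-((1 - α₅) / (1 - α₃⁻¹))) • ω₄ ∧
    (∀ l : K, T₄₅ (ω₂ + l • ω₄) ≡ ω₂ + (α₃⁻¹ * l) • ω₄ [SMOD Submodule.span K {ω₁}]) ∧
    (∀ l : K, T₃₄ (ω₂ + l • ω₄) ≡
        ω₂ + (-((1 - α₄) * (1 - α₅)) / (1 - α₃⁻¹) + α₅⁻¹ * l) • ω₄
        [SMOD Submodule.span K {ω₁}]) := by
  have hα₅ : α₃⁻¹ * α₄⁻¹ = α₅ := by rw [← mul_inv, inv_eq_of_mul_eq_one_right h345]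
  have hα₄α₅ : α₄ * α₅ = α₃⁻¹ := eq_inv_of_mul_eq_one_right (by rw [← mul_assoc, h345])
  have hω₃ : ω₃ = (-(κ / (1 - α₃⁻¹))) • ω₁ + (-((1 - α₅) / (1 - α₃⁻¹))) • ω₄ :=
    eq_neg_div_smul_add_neg_div_smul (sub_ne_zero.mpr (inv_ne_one.mpr hα₃).symm) (hα₅ ▸ hrel)
  have hω₃_mod : ω₃ ≡ (-((1 - α₅) / (1 - α₃⁻¹))) • ω₄ [SMOD Submodule.span K {ω₁}] := by
    rw [SModEq.sub_mem, sub_eq_of_eq_add hω₃]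
    exact Submodule.smul_mem _ _ (Submodule.mem_span_singleton_self ω₁)
  refine ⟨hω₃, fun l => ?_, fun l => ?_⟩
  · rw [map_add, map_smul, h45₂, h45₄, hα₄α₅, smul_smul, mul_comm l]
  · convert map_add_smul_smodEq hω₃_mod h34₂ h34₄ l using 3
    rw [← one_add_sub_mul_mul_neg_div_eq_inv hα₃ h345]
    ring

end Field

/-- Parabolic monodromy at a cusp: with roots of unity α₁,…,α₅ (each ≠ 1),
    α₁α₂ = 1, α₃α₄α₅ = 1, vectors ω₁,…,ω₄ spanning a 3-dimensional space subject to
    the single relation (1-α₁⁻¹)ω₁ + (1-α₃⁻¹)ω₃ + (1-α₃⁻¹α₄⁻¹)ω₄ = 0, and the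
    operators T₄₅, T₃₄ defined on ω₁, ω₂, ω₄ as displayed, one has
    ω₃ = -((1-α₁⁻¹)/(1-α₃⁻¹))ω₁ - ((1-α₅)/(1-α₃⁻¹))ω₄ and, modulo ω₁,
    T₄₅(ω₂+λω₄) ≡ ω₂ + α₃⁻¹λω₄ and
    T₃₄(ω₂+λω₄) ≡ ω₂ + (-(1-α₄)(1-α₅)/(1-α₃⁻¹) + α₅⁻¹λ)ω₄.
    (Indices are 0-based: α i, ω i.) -/
theorem stmt19 (V : Type*) [AddCommGroup V] [Module ℂ V] [FiniteDimensional ℂ V]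
    (hdim : Module.finrank ℂ V = 3)
    (α : Fin 5 → ℂ) (hroot : ∀ i, ∃ k : ℕ, 0 < k ∧ α i ^ k = 1)
    (hne : ∀ i, α i ≠ 1)
    (h12 : α 0 * α 1 = 1) (h345 : α 2 * α 3 * α 4 = 1)
    (ω : Fin 4 → V) (hspan : Submodule.span ℂ (Set.range ω) = ⊤)
    (hrel : (1 - (α 0)⁻¹) • ω 0 + (1 - (α 2)⁻¹) • ω 2 +
        (1 - (α 2)⁻¹ * (α 3)⁻¹) • ω 3 = 0)
    (T45 T34 : V →ₗ[ℂ] V)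
    (h45a : T45 (ω 0) = ω 0) (h45b : T45 (ω 1) = ω 1)
    (h45c : T45 (ω 3) = (α 3 * α 4) • ω 3)
    (h34a : T34 (ω 0) = ω 0)
    (h34b : T34 (ω 1) = ω 1 + (1 - α 3) • ω 2)
    (h34c : T34 (ω 3) = ω 3 + (α 3 - α 2 * α 3) • ω 2) :
    ω 2 = (-((1 - (α 0)⁻¹) / (1 - (α 2)⁻¹))) • ω 0 +
        (-((1 - α 4) / (1 - (α 2)⁻¹))) • ω 3 ∧
    (∀ l : ℂ, T45 (ω 1 + l • ω 3) - (ω 1 + ((α 2)⁻¹ * l) • ω 3) ∈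
        Submodule.span ℂ {ω 0}) ∧
    (∀ l : ℂ, T34 (ω 1 + l • ω 3) -
        (ω 1 + (-((1 - α 3) * (1 - α 4)) / (1 - (α 2)⁻¹) + (α 4)⁻¹ * l) • ω 3) ∈
        Submodule.span ℂ {ω 0}) := by
  simpa only [SModEq.sub_mem] using
    stmt19_general (hne 2) h345 hrel h45b h45c h34b h34c
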